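/- arXiv:1603.08271 — 3 statements merged into one kernel-verified Lean document; each statement's English description precedes it below -/
import Mathlib

section
/- Let 0 < ε < 1/2 and let f : ℝ → ℂ be defined by f̂(ξ) = e^{50iξ}(1+ξ²)^{-1/4}(1+log(1+ξ²))^{-2}. Then the function g with ĝ(ξ) = (1+ξ²)^{ε/2} f̂(ξ) satisfies: for every open interval (c,d) containing -50, ∫_c^d |g(x)|² dx = ∞. -/
open MeasureTheory Real Filter Complex

noncomputable def hh (a ξ : ℝ) : ℝ := (1 + ξ ^ 2) ^ (-a) * (1 + Real.log (1 + ξ ^ 2)) ^ (-(2 : ℝ))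

noncomputable def kk (a ξ : ℝ) : ℝ :=
  2 * ξ / (1 + ξ ^ 2) * (hh a ξ * (a + 2 / (1 + Real.log (1 + ξ ^ 2))))

lemma L_nonneg (ξ : ℝ) : 0 ≤ Real.log (1 + ξ ^ 2) := Real.log_nonneg (by nlinarith [sq_nonneg ξ])

lemma hh_pos (a ξ : ℝ) : 0 < hh a ξ := by
  have := L_nonneg ξ
  unfold hh; positivity

lemma hh_deriv (a ξ : ℝ) : HasDerivAt (hh a) (-kk a ξ) ξ := by
  have hL := L_nonneg ξ
  have h1 : HasDerivAt (fun ξ : ℝ => 1 + ξ ^ 2) (2 * ξ) ξ := by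
    simpa using ((hasDerivAt_id ξ).pow 2).const_add 1
  have hp : 0 < 1 + ξ ^ 2 := by positivity
  have hl : 0 < 1 + Real.log (1 + ξ ^ 2) := by positivity
  have h2 := h1.rpow_const (p := -a) (Or.inl hp.ne')
  have h3 := ((h1.log hp.ne').const_add 1).rpow_const (p := -(2:ℝ)) (Or.inl hl.ne')
  have h4 := h2.mul h3
  refine h4.congr_deriv ?_
  unfold kk hh
  rw [Real.rpow_sub_one hp.ne', Real.rpow_sub_one hl.ne']
  field_simp
  ring

lemma hh_le (a ξ : ℝ) : hh a ξ ≤ (1 + ξ ^ 2) ^ (-a) := by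
  have hL := L_nonneg ξ
  have : (1 + Real.log (1 + ξ ^ 2)) ^ (-(2 : ℝ)) ≤ 1 :=
    Real.rpow_le_one_of_one_le_of_nonpos (by linarith) (by norm_num)
  unfold hh
  exact mul_le_of_le_one_right (by positivity) this

lemma hh_anti (a : ℝ) (ha : 0 < a) (x y : ℝ) (hx : 0 ≤ x) (hxy : x ≤ y) : hh a y ≤ hh a x := by
  have hL := L_nonneg x
  unfold hh
  have h1 : 1 + x ^ 2 ≤ 1 + y ^ 2 := by gcongr
  have h2 : Real.log (1 + x ^ 2) ≤ Real.log (1 + y ^ 2) := Real.log_le_log (by positivity) h1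
  apply mul_le_mul
  · exact Real.rpow_le_rpow_of_nonpos (by positivity) h1 (by linarith)
  · exact Real.rpow_le_rpow_of_nonpos (by positivity) (by linarith) (by norm_num)
  · have := L_nonneg y
    positivity
  · positivity

lemma kk_cont (a : ℝ) : Continuous (kk a) := by
  have hc : Continuous (hh a) := continuous_iff_continuousAt.2 fun x => (hh_deriv a x).continuousAt
  have hl : Continuous (fun ξ : ℝ => Real.log (1 + ξ ^ 2)) :=
    Continuous.log (by fun_prop) (fun x => by positivity)
  unfold kk
  refine ((by fun_prop : Continuous fun ξ : ℝ => 2 * ξ).div (by fun_prop) (fun x => by positivity)).mul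
    (hc.mul (continuous_const.add (continuous_const.div (continuous_const.add hl) (fun x => ?_))))
  have := L_nonneg x
  positivity

lemma kk_integrable (a : ℝ) (ha : 0 < a) : Integrable (kk a) := by
  have h0 : Integrable (fun x : ℝ => (2 * (a + 2)) * (1 + ‖x‖ ^ 2) ^ (-(1 + 2 * a) / 2)) :=
    (integrable_rpow_neg_one_add_norm_sq (by simp; linarith)).const_mul _
  refine h0.mono' (kk_cont a).aestronglyMeasurable (Eventually.of_forall fun x => ?_)
  have hL := L_nonneg x
  have hp : 0 < 1 + x ^ 2 := by positivity
  have e : (1 + ‖x‖ ^ 2) ^ (-(1 + 2 * a) / 2) = (√(1 + x^2))⁻¹ * (1 + x ^ 2) ^ (-a) := by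
    rw [Real.norm_eq_abs, sq_abs, Real.sqrt_eq_rpow, ← Real.rpow_neg hp.le, ← Real.rpow_add hp]
    congr 1; ring
  rw [e]
  unfold kk
  have hh0 := hh_pos a x
  have b1 : |2 * x / (1 + x ^ 2)| ≤ 2 * (√(1 + x^2))⁻¹ := by
    have hs : 0 < √(1 + x^2) := by positivity
    have hx : |x| ≤ √(1 + x^2) := by
      apply Real.abs_le_sqrt; linarith
    rw [abs_div, abs_mul, abs_of_pos hp, abs_two, div_le_iff₀ hp]
    have : (√(1 + x^2))⁻¹ * (1 + x^2) = √(1 + x^2) := by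
      field_simp
      rw [Real.sq_sqrt hp.le]
    rw [mul_assoc, this]; linarith
  have b2 : |hh a x * (a + 2 / (1 + Real.log (1 + x ^ 2)))| ≤ (1 + x ^ 2) ^ (-a) * (a + 2) := by
    rw [abs_of_nonneg (by positivity)]
    apply mul_le_mul (hh_le a x) _ (by positivity) (by positivity)
    gcongr
    rw [div_le_iff₀ (by positivity)]; linarith
  rw [Real.norm_eq_abs, abs_mul]
  calc _ ≤ (2 * (√(1 + x^2))⁻¹) * ((1 + x ^ 2) ^ (-a) * (a + 2)) := by gcongr
    _ = _ := by ring

lemma hh_tendsto (a : ℝ) (ha : 0 < a) : Tendsto (hh a) atTop (nhds 0) := by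
  have h1 : Tendsto (fun x : ℝ => 1 + x ^ 2) atTop atTop :=
    tendsto_atTop_add_const_left _ _ (tendsto_pow_atTop (by norm_num))
  exact squeeze_zero (fun x => (hh_pos a x).le) (fun x => hh_le a x)
    ((tendsto_rpow_neg_atTop ha).comp h1)

noncomputable def PP (a y : ℝ) : ℝ := ∫ ξ, Real.sin (y * ξ) * kk a ξ

lemma sin_kk_int (a : ℝ) (ha : 0 < a) (y : ℝ) : Integrable fun ξ => Real.sin (y * ξ) * kk a ξ := by
  refine (kk_integrable a ha).bdd_mul (c := 1) (by fun_prop) (Eventually.of_forall fun x => ?_)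
  exact Real.abs_sin_le_one _

lemma trunc_tendsto (a : ℝ) (ha : 0 < a) (y : ℝ) (hy : y ≠ 0) :
    Tendsto (fun R : ℝ => ∫ ξ in (-R)..R, Real.cos (y * ξ) * hh a ξ) atTop (nhds (PP a y / y)) := by
  have key : ∀ R : ℝ, ∫ ξ in (-R)..R, Real.cos (y * ξ) * hh a ξ =
      2 * Real.sin (y * R) * hh a R / y + (∫ ξ in (-R)..R, Real.sin (y * ξ) * kk a ξ) / y := by
    intro R
    have hd : ∀ ξ : ℝ, HasDerivAt (fun ξ => Real.sin (y * ξ) * hh a ξ)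
        (y * (Real.cos (y * ξ) * hh a ξ) - Real.sin (y * ξ) * kk a ξ) ξ := by
      intro ξ
      have h1 : HasDerivAt (fun ξ : ℝ => y * ξ) y ξ := by
        simpa using (hasDerivAt_id ξ).const_mul y
      refine (h1.sin.mul (hh_deriv a ξ)).congr_deriv ?_
      ring
    have hc : Continuous (hh a) := continuous_iff_continuousAt.2 fun x => (hh_deriv a x).continuousAt
    have hk := kk_cont a
    have i1 : IntervalIntegrable (fun ξ => Real.cos (y * ξ) * hh a ξ) volume (-R) R :=
      Continuous.intervalIntegrable (by fun_prop) _ _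
    have i2 : IntervalIntegrable (fun ξ => Real.sin (y * ξ) * kk a ξ) volume (-R) R :=
      Continuous.intervalIntegrable (by fun_prop) _ _
    have := intervalIntegral.integral_eq_sub_of_hasDerivAt (a := -R) (b := R) (fun ξ _ => hd ξ)
      ((i1.const_mul y).sub i2)
    rw [intervalIntegral.integral_sub (i1.const_mul y) i2, intervalIntegral.integral_const_mul] at this
    have ev : hh a (-R) = hh a R := by simp [hh]
    rw [ev, mul_neg, Real.sin_neg] at this
    field_simp
    linarith
  simp_rw [key]
  have t1 : Tendsto (fun R : ℝ => 2 * Real.sin (y * R) * hh a R / y) atTop (nhds 0) := by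
    have : Tendsto (fun R : ℝ => Real.sin (y * R) * hh a R) atTop (nhds 0) := by
      apply squeeze_zero_norm (fun R => ?_) (hh_tendsto a ha)
      rw [norm_mul, Real.norm_eq_abs, Real.norm_eq_abs, abs_of_pos (hh_pos a R)]
      exact mul_le_of_le_one_left (hh_pos a R).le (Real.abs_sin_le_one _)
    have := this.const_mul (2 / y)
    simp only [mul_zero] at this
    exact this.congr (fun R => by ring)
  have t2 := (intervalIntegral_tendsto_integral (sin_kk_int a ha y) tendsto_neg_atTop_atBot
    tendsto_id).div_const y
  simpa [PP] using t1.add t2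

lemma PP_integral (a : ℝ) (ha : 0 < a) (δ : ℝ) (hδ : 0 < δ) :
    IntervalIntegrable (PP a) volume 0 δ ∧
    Integrable (fun ξ => (1 - Real.cos (δ * ξ)) / ξ * kk a ξ) ∧
    ∫ y in 0..δ, PP a y = ∫ ξ, (1 - Real.cos (δ * ξ)) / ξ * kk a ξ := by
  have hk := kk_cont a
  have hint : Integrable (Function.uncurry fun y ξ : ℝ => Real.sin (y * ξ) * kk a ξ)
      ((volume.restrict (Set.Ioc 0 δ)).prod volume) := by
    have h1 : Integrable (fun z : ℝ × ℝ => (1:ℝ) * kk a z.2)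
      ((volume.restrict (Set.Ioc 0 δ)).prod volume) := by
      refine Integrable.mul_prod (f := fun _ : ℝ => (1:ℝ)) ?_ (kk_integrable a ha)
      exact integrable_const _
    simp only [one_mul] at h1
    refine h1.bdd_mul (c := 1) (f := fun z : ℝ × ℝ => Real.sin (z.1 * z.2)) (by fun_prop)
      (Eventually.of_forall fun x => ?_)
    exact Real.abs_sin_le_one _
  have inner : ∀ ξ : ℝ, ∫ y in Set.Ioc 0 δ, Real.sin (y * ξ) * kk a ξ
      = (1 - Real.cos (δ * ξ)) / ξ * kk a ξ := by
    intro ξ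
    rw [integral_mul_const]
    by_cases h : ξ = 0
    · simp [h]
    · rw [← intervalIntegral.integral_of_le hδ.le, intervalIntegral.integral_comp_mul_right _ h]
      simp
      left; field_simp
  refine ⟨?_, ?_, ?_⟩
  · rw [intervalIntegrable_iff_integrableOn_Ioc_of_le hδ.le]
    exact hint.integral_prod_left
  · have := hint.integral_prod_right
    simpa only [Function.uncurry, inner] using this
  · rw [intervalIntegral.integral_of_le hδ.le]
    unfold PP
    rw [integral_integral_swap hint]
    simp_rw [inner]

lemma PP_lower (a : ℝ) (ha : 0 < a) (N : ℝ) (hN : 2 ≤ N) :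
    a / π ^ 2 * (hh a N / N) ≤ ∫ y in 0..N⁻¹, PP a y := by
  have hN0 : 0 < N := by linarith
  obtain ⟨-, hi, he⟩ := PP_integral a ha N⁻¹ (by positivity)
  rw [he]
  have hnn : ∀ ξ, 0 ≤ (1 - Real.cos (N⁻¹ * ξ)) / ξ * kk a ξ := by
    intro ξ
    have := L_nonneg ξ
    have h1 := Real.cos_le_one (N⁻¹ * ξ)
    have h2 := hh_pos a ξ
    have e : (1 - Real.cos (N⁻¹ * ξ)) / ξ * kk a ξ = (1 - Real.cos (N⁻¹ * ξ)) * (ξ / ξ) *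
        (2 / (1 + ξ ^ 2) * (hh a ξ * (a + 2 / (1 + Real.log (1 + ξ ^ 2))))) := by
      unfold kk; ring
    rw [e]
    have : 0 ≤ ξ / ξ := by by_cases h : ξ = 0 <;> simp [h]
    have : 0 ≤ 1 - Real.cos (N⁻¹ * ξ) := by linarith
    positivity
  have hs := setIntegral_le_integral (s := Set.Icc (N/2) N) hi (Eventually.of_forall hnn)
  refine le_trans ?_ hs
  have hc := setIntegral_ge_of_const_le_real (μ := volume) (s := Set.Icc (N/2) N)
    (c := 2 * a / π ^ 2 * (hh a N / N^2)) (f := fun ξ => (1 - Real.cos (N⁻¹ * ξ)) / ξ * kk a ξ)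
    measurableSet_Icc (by simp) ?_ hi.integrableOn
  · refine le_trans (le_of_eq ?_) hc
    rw [Measure.real, Real.volume_Icc, ENNReal.toReal_ofReal (by linarith)]
    field_simp; ring
  · rintro ξ ⟨h1, h2⟩
    have hξ1 : 1 ≤ ξ := by linarith
    have hξ : 0 < ξ := by linarith
    have hL := L_nonneg ξ
    have hle : N⁻¹ * ξ ≤ 1 := by rw [inv_mul_le_iff₀ hN0]; linarith
    have hcos := Real.cos_le_one_sub_mul_cos_sq (x := N⁻¹ * ξ)
      (by rw [abs_of_nonneg (by positivity)]; linarith [Real.pi_gt_three])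
    have hk : a / ξ * hh a N ≤ kk a ξ := by
      unfold kk
      have hm := hh_anti a ha ξ N hξ.le h2
      have hξp := (hh_pos a ξ).le
      have hN := hh_pos a N
      have : 1 / ξ ≤ 2 * ξ / (1 + ξ ^ 2) := by
        rw [div_le_div_iff₀ hξ (by positivity)]; nlinarith
      calc a / ξ * hh a N = 1 / ξ * (hh a N * a) := by ring
        _ ≤ _ := by
          have : a ≤ a + 2 / (1 + Real.log (1 + ξ ^ 2)) := by
            have : 0 ≤ 2 / (1 + Real.log (1 + ξ ^ 2)) := by positivity
            linarith
          gcongr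
    have hN := hh_pos a N
    calc 2 * a / π ^ 2 * (hh a N / N^2) = (2 / π^2 * (N⁻¹ * ξ)^2) / ξ * (a / ξ * hh a N) := by
          field_simp
      _ ≤ _ := by
        gcongr
        · have := Real.cos_le_one (N⁻¹ * ξ)
          apply div_nonneg <;> linarith
        · linarith

lemma final_growth (a : ℝ) (ha : 0 < a) (ha' : a < 1/4) (C : ℝ) :
    ∀ᶠ N : ℝ in atTop, C < √N * hh a N := by
  have hb : 0 < 1 / 4 - a := by linarith
  have h1 : Tendsto (fun x : ℝ => 1 + x ^ 2) atTop atTop :=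
    tendsto_atTop_add_const_left _ _ (tendsto_pow_atTop (by norm_num))
  have h2 : Tendsto (fun x : ℝ => 1 + Real.log (1 + x ^ 2)) atTop atTop :=
    tendsto_atTop_add_const_left _ _ (Real.tendsto_log_atTop.comp h1)
  have h3 := ((tendsto_exp_mul_div_rpow_atTop 2 (1 / 4 - a) hb).comp h2).eventually_gt_atTop
    (C * 2 ^ (1 / 4 : ℝ) * rexp (1 / 4 - a))
  filter_upwards [h3, eventually_ge_atTop 1] with N hN hN1
  simp only [Function.comp] at hN
  have hL := L_nonneg N
  have hp : 0 < 1 + N ^ 2 := by positivity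
  rw [mul_add, mul_one, Real.exp_add, mul_comm (1 / 4 - a) (Real.log _), ← Real.rpow_def_of_pos hp,
    sub_eq_add_neg, Real.rpow_add hp, div_eq_mul_inv (_ * _) (_ ^ (2 : ℝ)),
    ← Real.rpow_neg (by positivity)] at hN
  have hq : (1 + N ^ 2) ^ (1 / 4 : ℝ) ≤ 2 ^ (1 / 4 : ℝ) * √N := by
    have : √N = (N ^ 2) ^ (1 / 4 : ℝ) := by
      rw [Real.sqrt_eq_rpow, ← Real.rpow_natCast, ← Real.rpow_mul (by linarith)]
      norm_num
    rw [this, ← Real.mul_rpow (by norm_num) (by positivity)]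
    apply Real.rpow_le_rpow (by positivity) _ (by norm_num)
    nlinarith
  have hh0 := hh_pos a N
  have h4 : C * 2 ^ (1 / 4 : ℝ) * rexp (1 / 4 + -a)
      < rexp (1 / 4 + -a) * ((1 + N ^ 2) ^ (1 / 4 : ℝ) * hh a N) := by
    refine hN.trans_eq ?_
    unfold hh; ring
  have h5 : (C * 2 ^ (1 / 4 : ℝ)) < (1 + N ^ 2) ^ (1 / 4 : ℝ) * hh a N := by
    have := Real.exp_pos (1 / 4 + -a)
    nlinarith
  have h6 : C * 2 ^ (1 / 4 : ℝ) < (√N * hh a N) * 2 ^ (1 / 4 : ℝ) := by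
    refine h5.trans_le ?_
    calc _ ≤ (2 ^ (1 / 4 : ℝ) * √N) * hh a N := by gcongr
      _ = _ := by ring
  exact lt_of_mul_lt_mul_right h6 (by positivity)

lemma PP_eq (ε : ℝ) (hε' : ε < 1 / 2) (x : ℝ) (hx : x + 50 ≠ 0) (w : ℂ)
    (hg : Tendsto (fun R : ℝ => (1 / (2 * π)) * ∫ ξ in (-R)..R,
          Complex.exp (Complex.I * x * ξ) *
            (Complex.exp (50 * Complex.I * ξ) *
              (((1 + ξ ^ 2) ^ (ε / 2 - 1 / 4) * (1 + Real.log (1 + ξ ^ 2)) ^ (-(2 : ℝ)) : ℝ) : ℂ)))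
        atTop (nhds w)) :
    PP (1 / 4 - ε / 2) (x + 50) = 2 * π * (x + 50) * w.re := by
  have ha : 0 < 1 / 4 - ε / 2 := by linarith
  have hc : Continuous (hh (1 / 4 - ε / 2)) :=
    continuous_iff_continuousAt.2 fun x => (hh_deriv _ x).continuousAt
  have h1 := (Complex.continuous_re.tendsto w).comp hg
  have h2 := (trunc_tendsto _ ha (x + 50) hx).const_mul (1 / (2 * π))
  have e : ∀ ξ : ℝ, Complex.exp (Complex.I * x * ξ) *
            (Complex.exp (50 * Complex.I * ξ) *
              (((1 + ξ ^ 2) ^ (ε / 2 - 1 / 4) * (1 + Real.log (1 + ξ ^ 2)) ^ (-(2 : ℝ)) : ℝ) : ℂ))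
      = Complex.exp (((x + 50) * ξ : ℝ) * Complex.I) * (hh (1 / 4 - ε / 2) ξ : ℂ) := by
    intro ξ
    rw [← mul_assoc, ← Complex.exp_add]
    unfold hh
    rw [neg_sub]
    congr 2
    push_cast; ring
  simp_rw [e] at h1
  have h3 : Tendsto (fun R : ℝ => 1 / (2 * π) *
      ∫ ξ in (-R)..R, Real.cos ((x + 50) * ξ) * hh (1 / 4 - ε / 2) ξ) atTop (nhds w.re) := by
    refine h1.congr fun R => ?_
    have i : IntervalIntegrable (fun ξ : ℝ => Complex.exp (((x + 50) * ξ : ℝ) * Complex.I) *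
        (hh (1 / 4 - ε / 2) ξ : ℂ)) volume (-R) R :=
      Continuous.intervalIntegrable (by fun_prop) _ _
    have h := Complex.reCLM.intervalIntegral_comp_comm i
    simp only [Complex.reCLM_apply, Complex.re_mul_ofReal, Complex.exp_ofReal_mul_I_re] at h
    rw [h]
    simp only [Function.comp]
    rw [show (1 / (2 * π) : ℂ) = ((1 / (2 * π) : ℝ) : ℂ) by push_cast; rfl, Complex.re_ofReal_mul]
  have h4 := tendsto_nhds_unique h3 h2
  rw [h4]
  have := Real.pi_pos
  field_simp

/-- The inverse Fourier transform `g` of `(1+ξ²)^{ε/2} f̂(ξ)`, where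
`f̂(ξ) = e^{50iξ}(1+ξ²)^{-1/4}(1+log(1+ξ²))^{-2}`, is not square-integrable on any
open interval containing `-50`.  Here `g` is characterized pointwise away from
`x = -50` as the limit of the truncated inverse Fourier integrals. -/
theorem lambda_eps_f_not_locally_L2_near_minus_fifty
    (ε : ℝ) (hε : 0 < ε) (hε' : ε < 1 / 2) (g : ℝ → ℂ)
    (hg : ∀ x : ℝ, x ≠ -50 →
      Tendsto (fun R : ℝ => (1 / (2 * π)) * ∫ ξ in (-R)..R,
          Complex.exp (Complex.I * x * ξ) *
            (Complex.exp (50 * Complex.I * ξ) *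
              (((1 + ξ ^ 2) ^ (ε / 2 - 1 / 4) * (1 + Real.log (1 + ξ ^ 2)) ^ (-(2 : ℝ)) : ℝ) : ℂ)))
        atTop (nhds (g x))) :
    ∀ c d : ℝ, c < -50 → -50 < d →
      ¬ IntegrableOn (fun x : ℝ => ‖g x‖ ^ 2) (Set.Ioo c d) := by
  intro c d hc hd hI
  set a := 1 / 4 - ε / 2 with ha_def
  have ha : 0 < a := by linarith
  set J := ∫ x in Set.Ioo c d, ‖g x‖ ^ 2 with hJ
  have hπ := Real.pi_pos
  -- the main estimate
  have main : ∀ N : ℝ, 2 ≤ N → (d + 50)⁻¹ < N →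
      √N * hh a N ≤ (π * (J + 1)) / (a / π ^ 2) := by
    intro N hN hNd
    have hN0 : 0 < N := by linarith
    have hδ : 0 < N⁻¹ := by positivity
    have hδd : N⁻¹ < d + 50 := by
      rw [inv_lt_comm₀ hN0 (by linarith)]; exact hNd
    have hlow := PP_lower a ha N hN
    have hsub : Set.Ioc (-50) (-50 + N⁻¹) ⊆ Set.Ioo c d :=
      fun x hx => ⟨by linarith [hx.1], by linarith [hx.2]⟩
    have hgi : IntervalIntegrable (fun x => ‖g x‖ ^ 2) volume (-50) (-50 + N⁻¹) := by
      rw [intervalIntegrable_iff_integrableOn_Ioc_of_le (by linarith)]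
      exact hI.mono_set hsub
    have hgi2 : IntervalIntegrable (fun y => ‖g (y + -50)‖ ^ 2) volume 0 N⁻¹ := by
      have := hgi.comp_add_right (-50)
      simpa using this
    have hgJ : ∫ y in 0..N⁻¹, ‖g (y + -50)‖ ^ 2 ≤ J := by
      rw [intervalIntegral.integral_comp_add_right (fun x => ‖g x‖ ^ 2) (-50), zero_add,
        intervalIntegral.integral_of_le (by linarith), hJ, add_comm N⁻¹]
      exact setIntegral_mono_set hI (Eventually.of_forall fun x => by positivity)
        (HasSubset.Subset.eventuallyLE hsub)
    -- s = N^{-3/2}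
    set s : ℝ := N⁻¹ * √N⁻¹ with hs
    have hs0 : 0 < s := by positivity
    have hss : s ^ 2 = N⁻¹ ^ 3 := by
      rw [hs, mul_pow, Real.sq_sqrt hδ.le]; ring
    have hup : ∫ y in 0..N⁻¹, PP a y ≤ ∫ y in 0..N⁻¹, (π * s * ‖g (y + -50)‖ ^ 2 + π / s * N⁻¹ ^ 2) := by
      apply intervalIntegral.integral_mono_on_of_le_Ioo hδ.le (PP_integral a ha _ hδ).1
      · exact (hgi2.const_mul _).add (by simp)
      · rintro y ⟨hy0, hy1⟩
        have he := PP_eq ε hε' (y + -50) (by linarith) _ (hg (y + -50) (by intro h; linarith))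
        rw [neg_add_cancel_right] at he
        rw [he]
        have hre : (g (y + -50)).re ≤ ‖g (y + -50)‖ := Complex.re_le_norm _
        set G := ‖g (y + -50)‖ with hG
        have hG0 : 0 ≤ G := norm_nonneg _
        have h1 : 2 * (y * G) ≤ s * G ^ 2 + y ^ 2 / s := by
          have : s * G ^ 2 + y ^ 2 / s - 2 * (y * G) = (s * G - y) ^ 2 / s := by
            field_simp; ring
          have : 0 ≤ (s * G - y) ^ 2 / s := by positivity
          linarith
        have h2 : y ^ 2 / s ≤ N⁻¹ ^ 2 / s := by gcongr
        calc 2 * π * y * (g (y + -50)).re ≤ 2 * π * y * G := by gcongr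
          _ = π * (2 * (y * G)) := by ring
          _ ≤ π * (s * G ^ 2 + N⁻¹ ^ 2 / s) := by gcongr; linarith
          _ = _ := by ring
    rw [intervalIntegral.integral_add (hgi2.const_mul _) (by simp),
      intervalIntegral.integral_const_mul, intervalIntegral.integral_const] at hup
    have h3 : (N⁻¹ - 0) • (π / s * N⁻¹ ^ 2) = π * s := by
      have : (N⁻¹ - 0) • (π / s * N⁻¹ ^ 2) = π * (N⁻¹ ^ 3) / s := by
        rw [smul_eq_mul]; ring
      rw [this, ← hss]; field_simp
    rw [h3] at hup
    have h4 : a / π ^ 2 * (hh a N / N) ≤ π * s * (J + 1) := by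
      have : π * s * ∫ y in 0..N⁻¹, ‖g (y + -50)‖ ^ 2 ≤ π * s * J := by gcongr
      linarith
    rw [le_div_iff₀ (by positivity)]
    have hsq : √N * √N⁻¹ = 1 := by
      rw [← Real.sqrt_mul hN0.le, mul_inv_cancel₀ hN0.ne', Real.sqrt_one]
    calc √N * hh a N * (a / π ^ 2) = (N * √N) * (a / π ^ 2 * (hh a N / N)) := by field_simp
      _ ≤ (N * √N) * (π * s * (J + 1)) := by gcongr
      _ = (N * N⁻¹) * (√N * √N⁻¹) * (π * (J + 1)) := by rw [hs]; ring
      _ = π * (J + 1) := by rw [hsq, mul_inv_cancel₀ hN0.ne']; ring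
  have hev := (final_growth a ha (by linarith) ((π * (J + 1)) / (a / π ^ 2))).and
    ((eventually_ge_atTop 2).and (eventually_gt_atTop (d + 50)⁻¹))
  obtain ⟨N, h1, h2, h3⟩ := hev.exists
  exact absurd (main N h2 h3) (not_le.2 h1)
end

section
/- Let ε > 0 and let η be the inverse Fourier transform of η̂(ξ) = (1+ξ²)^{-1/4}(1+log(1+ξ²))^{-2}. Then Λ^ε η is a well-defined smooth function on ℝ \ {0}, and for every k ∈ ℕ there is a constant C_k such that |(Λ^ε η)(x)| ≤ C_k (1+|x|)^{-k} for all |x| ≥ 1. -/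
open MeasureTheory Real Filter Complex

/-- Elementary symbol of order `j + 2b`. -/
noncomputable def symTerm (j : ℕ) (b : ℝ) (c : ℕ) (x : ℝ) : ℝ :=
  x ^ j * (1 + x ^ 2) ^ b * ((1 + Real.log (1 + x ^ 2)) ^ c)⁻¹

/-- Span of elementary symbols of order `s`. -/
noncomputable def symSpan (s : ℝ) : Submodule ℝ (ℝ → ℝ) :=
  Submodule.span ℝ {f | ∃ (j : ℕ) (b : ℝ) (c : ℕ), (j : ℝ) + 2 * b = s ∧ f = symTerm j b c}

lemma log_part_ge (x : ℝ) : 1 ≤ 1 + Real.log (1 + x ^ 2) := by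
  have := Real.log_nonneg (x := 1 + x ^ 2) (by nlinarith [sq_nonneg x])
  linarith

lemma symTerm_bound (j : ℕ) (b : ℝ) (c : ℕ) (x : ℝ) :
    |symTerm j b c x| ≤ (1 + x ^ 2) ^ (((j : ℝ) + 2 * b) / 2) := by
  have h0 : 0 < 1 + x ^ 2 := by positivity
  have hL := log_part_ge x
  unfold symTerm
  rw [abs_mul, abs_mul, abs_pow]
  have h1 : |x| ^ j ≤ (1 + x ^ 2) ^ ((j : ℝ) / 2) := by
    have : |x| ≤ (1 + x ^ 2) ^ ((1 : ℝ) / 2) := by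
      rw [← Real.sqrt_eq_rpow]
      apply Real.abs_le_sqrt; linarith
    calc |x| ^ j ≤ ((1 + x ^ 2) ^ ((1 : ℝ) / 2)) ^ j := by gcongr
      _ = _ := by rw [← Real.rpow_natCast, ← Real.rpow_mul h0.le]; congr 1; ring
  have h2 : |((1 + Real.log (1 + x ^ 2)) ^ c)⁻¹| ≤ 1 := by
    rw [abs_of_nonneg (by positivity)]
    exact inv_le_one_of_one_le₀ (one_le_pow₀ hL)
  have h3 : |(1 + x ^ 2) ^ b| = (1 + x ^ 2) ^ b := abs_of_nonneg (by positivity)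
  rw [h3]
  calc _ ≤ (1 + x ^ 2) ^ ((j : ℝ) / 2) * (1 + x ^ 2) ^ b * 1 := by gcongr
    _ = _ := by rw [mul_one, ← Real.rpow_add h0]; congr 1; ring

lemma symSpan_bound {s : ℝ} {f : ℝ → ℝ} (hf : f ∈ symSpan s) :
    ∃ C : ℝ, ∀ x, |f x| ≤ C * (1 + x ^ 2) ^ (s / 2) := by
  unfold symSpan at hf
  induction hf using Submodule.span_induction with
  | mem f h =>
    obtain ⟨j, b, c, rfl, rfl⟩ := h
    exact ⟨1, fun x => by rw [one_mul]; exact symTerm_bound j b c x⟩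
  | zero => exact ⟨0, fun x => by simp⟩
  | add f g _ _ h1 h2 =>
    obtain ⟨C, hC⟩ := h1
    obtain ⟨D, hD⟩ := h2
    refine ⟨C + D, fun x => ?_⟩
    rw [add_mul]
    exact (abs_add_le _ _).trans (add_le_add (hC x) (hD x))
  | smul r f _ h1 =>
    obtain ⟨C, hC⟩ := h1
    refine ⟨|r| * C, fun x => ?_⟩
    rw [Pi.smul_apply, smul_eq_mul, abs_mul, mul_assoc]
    exact mul_le_mul_of_nonneg_left (hC x) (abs_nonneg r)

lemma symTerm_mem {s : ℝ} (j : ℕ) (b : ℝ) (c : ℕ) (h : (j : ℝ) + 2 * b = s) :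
    symTerm j b c ∈ symSpan s := Submodule.subset_span ⟨j, b, c, h, rfl⟩

lemma symTerm_deriv (j : ℕ) (b : ℝ) (c : ℕ) :
    ∃ f' ∈ symSpan ((j : ℝ) + 2 * b - 1), ∀ x, HasDerivAt (symTerm j b c) (f' x) x := by
  refine ⟨(j : ℝ) • symTerm (j - 1) b c + (2 * b) • symTerm (j + 1) (b - 1) c
    - (2 * c : ℝ) • symTerm (j + 1) (b - 1) (c + 1), ?_, ?_⟩
  · refine Submodule.sub_mem _ (Submodule.add_mem _ ?_ ?_) ?_
    · rcases j with _ | j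
      · simp
      · exact Submodule.smul_mem _ _ (symTerm_mem _ _ _ (by push_cast; ring))
    · exact Submodule.smul_mem _ _ (symTerm_mem _ _ _ (by push_cast; ring))
    · exact Submodule.smul_mem _ _ (symTerm_mem _ _ _ (by push_cast; ring))
  · intro x
    have h0 : 0 < 1 + x ^ 2 := by positivity
    have hL := log_part_ge x
    have hL0 : 1 + Real.log (1 + x ^ 2) ≠ 0 := by linarith
    have d1 : HasDerivAt (fun x : ℝ => 1 + x ^ 2) (2 * x) x := by
      simpa using (hasDerivAt_pow 2 x).const_add 1
    have d2 := d1.rpow_const (p := b) (Or.inl h0.ne')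
    have d3 := (((d1.log h0.ne').const_add 1).pow c).inv (pow_ne_zero c hL0)
    have d4 := ((hasDerivAt_pow j x).mul d2).mul d3
    refine d4.congr_deriv ?_
    simp only [Pi.sub_apply, Pi.add_apply, Pi.smul_apply, smul_eq_mul, symTerm, Pi.mul_apply,
      Pi.pow_apply, Pi.inv_apply]
    rw [Real.rpow_sub_one h0.ne']
    set L := 1 + Real.log (1 + x ^ 2)
    set B := (1 + x ^ 2) ^ b
    rcases c with _ | c
    · simp
      field_simp
      ring
    · simp only [Nat.add_sub_cancel]
      push_cast
      field_simp
      ring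

lemma symSpan_deriv {s : ℝ} {f : ℝ → ℝ} (hf : f ∈ symSpan s) :
    ∃ f' ∈ symSpan (s - 1), ∀ x, HasDerivAt f (f' x) x := by
  unfold symSpan at hf
  induction hf using Submodule.span_induction with
  | mem f h =>
    obtain ⟨j, b, c, rfl, rfl⟩ := h
    exact symTerm_deriv j b c
  | zero => exact ⟨0, Submodule.zero_mem _, fun x => hasDerivAt_const x 0⟩
  | add f g _ _ h1 h2 =>
    obtain ⟨C, hC, hC'⟩ := h1
    obtain ⟨D, hD, hD'⟩ := h2
    exact ⟨C + D, Submodule.add_mem _ hC hD, fun x => (hC' x).add (hD' x)⟩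
  | smul r f _ h1 =>
    obtain ⟨C, hC, hC'⟩ := h1
    exact ⟨r • C, Submodule.smul_mem _ _ hC, fun x => (hC' x).const_smul r⟩

lemma sym_seq {s : ℝ} {f : ℝ → ℝ} (hf : f ∈ symSpan s) :
    ∃ F : ℕ → ℝ → ℝ, F 0 = f ∧ (∀ n x, HasDerivAt (F n) (F (n + 1) x) x) ∧
      ∀ n : ℕ, ∃ C : ℝ, ∀ x, |F n x| ≤ C * (1 + x ^ 2) ^ ((s - n) / 2) := by
  choose D hD hD' using fun (p : Σ t : ℝ, symSpan t) => symSpan_deriv p.2.2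
  let G : ∀ n : ℕ, symSpan (s - n) := fun n => Nat.rec (motive := fun n => symSpan (s - n))
    ⟨f, by simpa using hf⟩
    (fun n g => ⟨D ⟨_, g⟩, by
      have := hD ⟨_, g⟩
      have e : s - ((n + 1 : ℕ) : ℝ) = s - n - 1 := by push_cast; ring
      rw [e]; exact this⟩) n
  exact ⟨fun n => (G n).1, rfl, fun n x => hD' ⟨_, G n⟩ x, fun n => symSpan_bound (G n).2⟩

lemma sym_integrable {s : ℝ} (hs : s < 0) {F : ℝ → ℂ} (hF : Continuous F) {n m : ℕ}
    (hm : m + 1 ≤ n) {C : ℝ}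
    (hC : ∀ x, ‖F x‖ ≤ C * (1 + x ^ 2) ^ ((s - n) / 2)) :
    Integrable (fun v : ℝ => ‖v‖ ^ m * ‖F v‖) := by
  have h1 : Integrable (fun x : ℝ => ((1 : ℝ) + ‖x‖ ^ 2) ^ (-(1 - s) / 2)) :=
    integrable_rpow_neg_one_add_norm_sq (by simp only [Module.finrank_self, Nat.cast_one]; linarith)
  have hC0 : 0 ≤ C := by
    have := (norm_nonneg _).trans (hC 0)
    simpa using this
  refine (h1.const_mul C).mono' (by fun_prop) (Eventually.of_forall fun x => ?_)
  have h0 : 0 < 1 + x ^ 2 := by positivity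
  have h01 : 1 ≤ 1 + x ^ 2 := by nlinarith [sq_nonneg x]
  rw [Real.norm_of_nonneg (by positivity)]
  have hx : ‖x‖ ^ m ≤ (1 + x ^ 2) ^ ((m : ℝ) / 2) := by
    have : |x| ≤ (1 + x ^ 2) ^ ((1 : ℝ) / 2) := by
      rw [← Real.sqrt_eq_rpow]
      apply Real.abs_le_sqrt; linarith
    calc ‖x‖ ^ m ≤ ((1 + x ^ 2) ^ ((1 : ℝ) / 2)) ^ m := by rw [Real.norm_eq_abs]; gcongr
      _ = _ := by rw [← Real.rpow_natCast, ← Real.rpow_mul h0.le]; congr 1; ring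
  have hmn : (m : ℝ) + 1 ≤ n := by exact_mod_cast hm
  calc ‖x‖ ^ m * ‖F x‖ ≤ (1 + x ^ 2) ^ ((m : ℝ) / 2) * (C * (1 + x ^ 2) ^ ((s - n) / 2)) := by
        gcongr
        exact hC x
    _ = C * (1 + x ^ 2) ^ ((m : ℝ) / 2 + (s - n) / 2) := by rw [Real.rpow_add h0]; ring
    _ ≤ C * (1 + x ^ 2) ^ (-(1 - s) / 2) := by
        apply mul_le_mul_of_nonneg_left _ hC0
        apply Real.rpow_le_rpow_of_exponent_le h01
        linarith
    _ = _ := by simp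

lemma norm_cexp_phase (x ξ : ℝ) : ‖Complex.exp (Complex.I * x * ξ)‖ = 1 := by
  have : Complex.I * x * ξ = ((x * ξ : ℝ) : ℂ) * Complex.I := by push_cast; ring
  rw [this, Complex.norm_exp_ofReal_mul_I]

lemma sym_tendsto_zero {t : ℝ} (ht : t < 0) {F : ℝ → ℂ} {C : ℝ}
    (hC : ∀ x, ‖F x‖ ≤ C * (1 + x ^ 2) ^ (t / 2)) :
    Tendsto F atTop (nhds 0) ∧ Tendsto (fun R => F (-R)) atTop (nhds 0) := by
  have h1 : Tendsto (fun R : ℝ => 1 + R ^ 2) atTop atTop :=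
    tendsto_atTop_add_const_left _ _ (tendsto_pow_atTop two_ne_zero)
  have h2 : Tendsto (fun R : ℝ => C * (1 + R ^ 2) ^ (t / 2)) atTop (nhds 0) := by
    have := ((tendsto_rpow_neg_atTop (y := -(t / 2)) (by linarith)).comp h1).const_mul C
    simpa [Function.comp_def] using this
  constructor
  · exact squeeze_zero_norm hC h2
  · exact squeeze_zero_norm (fun R => by simpa using hC (-R)) h2

lemma sym_step {F F' : ℝ → ℂ} (hd : ∀ x, HasDerivAt F (F' x) x) (hc : Continuous F')
    (hi : Integrable F') (h0 : Tendsto F atTop (nhds 0))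
    (h0' : Tendsto (fun R => F (-R)) atTop (nhds 0)) {x : ℝ} (hx : x ≠ 0) :
    Tendsto (fun R : ℝ => ∫ ξ in (-R)..R, Complex.exp (Complex.I * x * ξ) * F ξ) atTop
      (nhds ((Complex.I / x) * ∫ ξ : ℝ, Complex.exp (Complex.I * x * ξ) * F' ξ)) := by
  have hxc : (x : ℂ) ≠ 0 := by exact_mod_cast hx
  have hix : Complex.I * x ≠ 0 := mul_ne_zero Complex.I_ne_zero hxc
  have hFc : Continuous F := continuous_iff_continuousAt.2 fun x => (hd x).continuousAt
  have hv : ∀ ξ : ℝ, HasDerivAt (fun ξ : ℝ => Complex.exp (Complex.I * x * ξ) / (Complex.I * x))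
      (Complex.exp (Complex.I * x * ξ)) ξ := by
    intro ξ
    have h1 : HasDerivAt (fun ξ : ℝ => Complex.I * x * (ξ : ℂ)) (Complex.I * x) ξ := by
      simpa using (Complex.ofRealCLM.hasDerivAt (x := ξ)).const_mul (Complex.I * x)
    refine (h1.cexp.div_const (Complex.I * x)).congr_deriv ?_
    field_simp
  have hI : Integrable (fun ξ : ℝ => Complex.exp (Complex.I * x * ξ) * F' ξ) := by
    refine hi.norm.mono' (by fun_prop) (Eventually.of_forall fun ξ => ?_)
    rw [norm_mul, norm_cexp_phase, one_mul]
  have key : ∀ R : ℝ, ∫ ξ in (-R)..R, Complex.exp (Complex.I * x * ξ) * F ξ =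
      F R * (Complex.exp (Complex.I * x * R) / (Complex.I * x))
      - F (-R) * (Complex.exp (Complex.I * x * (-R : ℝ)) / (Complex.I * x))
      + (Complex.I / x) * ∫ ξ in (-R)..R, Complex.exp (Complex.I * x * ξ) * F' ξ := by
    intro R
    have := intervalIntegral.integral_mul_deriv_eq_deriv_mul (a := -R) (b := R)
      (fun y _ => hd y) (fun y _ => hv y) (hc.intervalIntegrable _ _)
      ((by fun_prop : Continuous fun ξ : ℝ =>
        Complex.exp (Complex.I * x * ξ)).intervalIntegrable _ _)
    simp_rw [mul_comm (Complex.exp _) (F _)]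
    rw [this, sub_eq_add_neg _ (∫ _ in _.._, _), ← intervalIntegral.integral_neg,
      ← intervalIntegral.integral_const_mul]
    congr 2
    ext ξ
    field_simp
    rw [Complex.I_sq]; ring
  have hb : ∀ (G : ℝ → ℂ) (σ : ℝ → ℝ), Tendsto G atTop (nhds 0) →
      Tendsto (fun R => G R * (Complex.exp (Complex.I * x * (σ R : ℝ)) / (Complex.I * x)))
        atTop (nhds 0) := by
    intro G σ hG
    have h2 := hG.norm.mul_const (‖(Complex.I * x : ℂ)‖⁻¹)
    simp only [norm_zero, zero_mul] at h2
    refine squeeze_zero_norm (fun R => ?_) h2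
    rw [norm_mul, norm_div, norm_cexp_phase, one_div]
  simp_rw [key]
  have h3 := intervalIntegral_tendsto_integral hI tendsto_neg_atTop_atBot tendsto_id
  have h4 := ((hb F id h0).sub (hb _ (fun R => -R) h0')).add (h3.const_mul (Complex.I / x))
  simpa using h4

lemma sym_fourier_contDiff {s : ℝ} (hs : s < 0) {F : ℝ → ℂ} (hF : Continuous F) {n : ℕ} {C : ℝ}
    (hC : ∀ x, ‖F x‖ ≤ C * (1 + x ^ 2) ^ ((s - (n + 1 : ℕ)) / 2)) :
    ContDiff ℝ n (fun x : ℝ => ∫ ξ : ℝ, Complex.exp (Complex.I * x * ξ) * F ξ) := by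
  have h := Real.contDiff_fourier (f := F) (N := n) (fun m hm =>
    sym_integrable hs hF (n := n + 1) (by
      have : m ≤ n := by exact_mod_cast hm
      omega) hC)
  have h2 : ContDiff ℝ n (fun x : ℝ => -x / (2 * π)) := by fun_prop
  have h3 : ContDiff ℝ n _ := h.comp h2
  refine (congrArg (ContDiff ℝ n) (funext fun x => ?_)).mpr h3
  simp only [Function.comp_apply]
  rw [Real.fourier_real_eq_integral_exp_smul]
  congr 1
  ext ξ
  rw [smul_eq_mul]
  congr 2
  have : (π : ℂ) ≠ 0 := by exact_mod_cast Real.pi_ne_zero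
  push_cast
  field_simp

/-- `Λ^ε η`, the inverse Fourier transform of `(1+ξ²)^{ε/2-1/4}(1+log(1+ξ²))^{-2}`, is a
well-defined smooth function on `ℝ \ {0}` which decays faster than any algebraic order
for `|x| ≥ 1`. -/
theorem lambda_eps_eta_smooth_and_rapidly_decaying_away_from_origin
    (ε : ℝ) (hε : 0 < ε) (hε' : ε < 1 / 2) :
    ∃ g : ℝ → ℂ,
      (∀ x : ℝ, x ≠ 0 →
        Tendsto (fun R : ℝ => (1 / (2 * π)) * ∫ ξ in (-R)..R,
            Complex.exp (Complex.I * x * ξ) *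
              (((1 + ξ ^ 2) ^ (ε / 2 - 1 / 4) * (1 + Real.log (1 + ξ ^ 2)) ^ (-(2 : ℝ)) : ℝ) : ℂ))
          atTop (nhds (g x))) ∧
      ContDiffOn ℝ (⊤ : ℕ∞) g {x : ℝ | x ≠ 0} ∧
      ∀ k : ℕ, ∃ C : ℝ, ∀ x : ℝ, 1 ≤ |x| → ‖g x‖ ≤ C * (1 + |x|) ^ (-(k : ℝ)) := by
  have hs : ε - 1 / 2 < 0 := by linarith
  obtain ⟨F, hF0, hFd, hFb⟩ := sym_seq (symTerm_mem (s := ε - 1 / 2) 0 (ε / 2 - 1 / 4) 2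
    (by push_cast; ring))
  choose C hC using hFb
  let G : ℕ → ℝ → ℂ := fun n x => (F n x : ℂ)
  have hGd : ∀ n x, HasDerivAt (G n) (G (n + 1) x) x := fun n x => (hFd n x).ofReal_comp
  have hGc : ∀ n, Continuous (G n) := fun n =>
    continuous_iff_continuousAt.2 fun x => (hGd n x).continuousAt
  have hGb : ∀ n x, ‖G n x‖ ≤ C n * (1 + x ^ 2) ^ ((ε - 1 / 2 - n) / 2) := fun n x => by
    simpa [G] using hC n x
  have hGi : ∀ n, Integrable (G (n + 1)) := fun n => by
    have := sym_integrable hs (hGc (n + 1)) (n := n + 1) (m := 0) (by omega) (hGb (n + 1))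
    simp only [pow_zero, one_mul] at this
    exact (integrable_norm_iff (hGc (n + 1)).aestronglyMeasurable).1 this
  let J : ℕ → ℝ → ℂ := fun n x => ∫ ξ : ℝ, Complex.exp (Complex.I * x * ξ) * G n ξ
  have hstep : ∀ n (x : ℝ), x ≠ 0 →
      Tendsto (fun R : ℝ => ∫ ξ in (-R)..R, Complex.exp (Complex.I * x * ξ) * G n ξ) atTop
        (nhds ((Complex.I / x) * J (n + 1) x)) := fun n x hx => by
    have hneg : ε - 1 / 2 - n < 0 := by
      have : (0 : ℝ) ≤ n := n.cast_nonneg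
      linarith
    obtain ⟨h0, h0'⟩ := sym_tendsto_zero hneg (hGb n)
    exact sym_step (hGd n) (hGc _) (hGi n) h0 h0' hx
  have hEi : ∀ (n : ℕ) (x : ℝ), Integrable (fun ξ : ℝ => Complex.exp (Complex.I * x * ξ) * G (n + 1) ξ) := by
    intro n x
    refine (hGi n).norm.mono' ?_ (Eventually.of_forall fun ξ => ?_)
    · have := hGc (n + 1)
      fun_prop
    · rw [norm_mul, norm_cexp_phase, one_mul]
  have hJ : ∀ n (x : ℝ), x ≠ 0 → J (n + 1) x = (Complex.I / x) * J (n + 2) x := fun n x hx =>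
    tendsto_nhds_unique
      (intervalIntegral_tendsto_integral (hEi n x) tendsto_neg_atTop_atBot tendsto_id)
      (hstep (n + 1) x hx)
  have hJ' : ∀ n (x : ℝ), x ≠ 0 →
      (Complex.I / x) * J 1 x = (Complex.I / x) ^ (n + 1) * J (n + 1) x := by
    intro n x hx
    induction n with
    | zero => simp
    | succ n ih => rw [ih, hJ n x hx]; ring
  refine ⟨fun x => (1 / (2 * π)) * ((Complex.I / x) * J 1 x), ?_, ?_, ?_⟩
  · intro x hx
    refine ((hstep 0 x hx).const_mul _).congr fun R => ?_
    congr 2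
    ext ξ
    congr 1
    simp only [G, hF0, symTerm, pow_zero, one_mul]
    have hL : 0 ≤ 1 + Real.log (1 + ξ ^ 2) := by linarith [log_part_ge ξ]
    rw [Real.rpow_neg hL]
    norm_num
  · rw [contDiffOn_infty]
    intro n
    have h1 : ContDiffOn ℝ n (fun x : ℝ => (1 / (2 * π) : ℂ) *
        ((Complex.I / x) ^ (n + 1) * J (n + 1) x)) {x : ℝ | x ≠ 0} := by
      refine contDiffOn_const.mul (ContDiffOn.mul (ContDiffOn.pow ?_ _) ?_)
      · have h5 : ContDiffOn ℝ n (fun x : ℝ => (x : ℂ)) {x : ℝ | x ≠ 0} :=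
          Complex.ofRealCLM.contDiff.contDiffOn
        simp only [div_eq_mul_inv]
        exact (contDiffOn_const (c := Complex.I)).mul (h5.inv fun x hx => by exact_mod_cast hx)
      · exact (sym_fourier_contDiff hs (hGc (n + 1)) (hGb (n + 1))).contDiffOn
    refine h1.congr fun x hx => ?_
    rw [hJ' n x hx]
  · intro k
    refine ⟨‖(1 / (2 * π) : ℂ)‖ * (∫ ξ, ‖G (k + 1) ξ‖) * 2 ^ k, fun x hx => ?_⟩
    have hx0 : x ≠ 0 := by
      rintro rfl
      norm_num at hx
    have hxp : 0 < |x| := by linarith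
    have hJb : ‖J (k + 1) x‖ ≤ ∫ ξ, ‖G (k + 1) ξ‖ := by
      refine (norm_integral_le_integral_norm _).trans_eq ?_
      congr 1
      ext ξ
      rw [norm_mul, norm_cexp_phase, one_mul]
    have hp : (|x|⁻¹) ^ (k + 1) ≤ 2 ^ k * (1 + |x|) ^ (-(k : ℝ)) := by
      rw [Real.rpow_neg (by positivity), Real.rpow_natCast, ← inv_pow, ← mul_pow]
      calc (|x|⁻¹) ^ (k + 1) ≤ (|x|⁻¹) ^ k :=
            pow_le_pow_of_le_one (by positivity) (inv_le_one_of_one_le₀ hx) (by omega)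
        _ ≤ _ := by
          gcongr
          rw [← div_eq_mul_inv, inv_eq_one_div, div_le_div_iff₀ hxp (by positivity)]
          linarith
    have hI0 : 0 ≤ ∫ ξ, ‖G (k + 1) ξ‖ := integral_nonneg fun _ => norm_nonneg _
    simp only []
    rw [hJ' k x hx0, norm_mul, norm_mul, norm_pow, norm_div Complex.I, Complex.norm_I, Complex.norm_real,
      Real.norm_eq_abs, one_div |x|]
    calc _ ≤ ‖(1 / (2 * π) : ℂ)‖ * ((2 ^ k * (1 + |x|) ^ (-(k : ℝ))) * ∫ ξ, ‖G (k + 1) ξ‖) := by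
          gcongr
      _ = _ := by ring
end

section
/- Let ε ∈ (0, 1/2) and define φ_n by φ̂_n(ξ) = e^{50iξ} χ_n(ξ) (1+ξ²)^{-1/4}(1+log(1+ξ²))^{-2}, where χ_n is an even C^∞ cutoff equal to 1 on [0,n] and vanishing outside [0, n+1] for ξ ≥ 0 (with uniformly bounded derivatives). Let p : ℝ → [0,1] be continuous with p = 1 on [-99,-5] and supp p ⊂ [-110,-1]. Then ∫_ℝ p(x) |(Λ^ε φ_n)(x)|² dx → ∞ as n → ∞. -/
open MeasureTheory Real Filter

open scoped FourierTransform SchwartzMap in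
lemma key_lower (a : ℝ → ℝ) (ha : ContDiff ℝ (⊤ : ℕ∞) a) (hc : HasCompactSupport a)
    (p : ℝ → ℝ) (hp : Continuous p) (hp01 : ∀ x, 0 ≤ p x ∧ p x ≤ 1)
    (hpone : ∀ x ∈ Set.Icc (-99 : ℝ) (-5), p x = 1) :
    (1 / (2 * π)) * ((∫ ξ, a ξ ^ 2) - (1 / 2025) * ∫ ξ, (deriv a ξ) ^ 2) ≤
    ∫ x : ℝ, p x * ‖(1 / (2 * π) : ℂ) *
      ∫ ξ : ℝ, Complex.exp (Complex.I * (x + 50) * ξ) * (a ξ : ℂ)‖ ^ 2 := by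
  have hac : ContDiff ℝ (⊤ : ℕ∞) (fun ξ => (a ξ : ℂ)) := Complex.ofRealCLM.contDiff.comp ha
  have hcc : HasCompactSupport (fun ξ => (a ξ : ℂ)) := hc.comp_left (g := fun r : ℝ => (r : ℂ)) (by simp)
  obtain ⟨f, hf⟩ : ∃ f : 𝓢(ℝ, ℂ), ∀ ξ, f ξ = (a ξ : ℂ) := ⟨hcc.toSchwartzMap hac, fun ξ => rfl⟩
  set f' : 𝓢(ℝ, ℂ) := SchwartzMap.derivCLM ℂ ℂ f with hf'
  have hfd : ∀ ξ, f' ξ = ((deriv a ξ : ℝ) : ℂ) := by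
    intro ξ
    rw [hf', SchwartzMap.derivCLM_apply]
    have : (f : ℝ → ℂ) = fun ξ => (a ξ : ℂ) := funext hf
    rw [this]
    exact ((ha.differentiable (by simp)) ξ).hasDerivAt.ofReal_comp.deriv
  set g : 𝓢(ℝ, ℂ) := 𝓕 f with hg
  have P1 : ∫ y, ‖g y‖ ^ 2 = ∫ ξ, a ξ ^ 2 := by
    rw [hg, SchwartzMap.integral_norm_sq_fourier]
    simp [hf]
  have hder : ∀ y, (𝓕 f') y = (2 * π * Complex.I * y) * g y := by
    intro y
    have h1 : (f' : ℝ → ℂ) = deriv f := by ext ξ; simp [hf']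
    rw [SchwartzMap.fourier_coe, h1,
      Real.fourier_deriv f.integrable f.differentiable (by rw [← h1]; exact f'.integrable), hg, SchwartzMap.fourier_coe]
    simp
  have P2 : ∫ y, (2 * π * y) ^ 2 * ‖g y‖ ^ 2 = ∫ ξ, (deriv a ξ) ^ 2 := by
    have := SchwartzMap.integral_norm_sq_fourier f'
    simp only [hder, hfd] at this
    simpa [mul_pow, abs_of_pos Real.pi_pos] using this
  have hF : ∀ x : ℝ, ∫ ξ : ℝ, Complex.exp (Complex.I * (x + 50) * ξ) * (a ξ : ℂ)
      = g ((-(x + 50)) / (2 * π)) := by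
    intro x
    rw [hg, SchwartzMap.fourier_coe, Real.fourier_real_eq_integral_exp_smul]
    congr 1; ext ξ
    rw [hf, smul_eq_mul]
    congr 2
    have : (π : ℂ) ≠ 0 := by exact_mod_cast Real.pi_ne_zero
    push_cast; field_simp
  have I1 : Integrable (fun y => ‖g y‖ ^ 2) := by
    have := (g.memLp 2 volume).integrable_norm_pow (by norm_num)
    simpa using this
  have I2 : Integrable (fun y : ℝ => (2 * π * y) ^ 2 * ‖g y‖ ^ 2) := by
    have := ((𝓕 f').memLp 2 volume).integrable_norm_pow (by norm_num)
    simp only [hder] at this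
    simpa [mul_pow, abs_of_pos Real.pi_pos] using this
  set G : ℝ → ℝ := fun y => (1 / (2 * π)) ^ 2 * (‖g y‖ ^ 2 - (1 / 2025) * ((2 * π * y) ^ 2 * ‖g y‖ ^ 2)) with hG
  have IG : Integrable G := (I1.sub (I2.const_mul _)).const_mul _
  have hpi : (0:ℝ) < 2 * π := by positivity
  have cv : ∀ H : ℝ → ℝ, ∫ x, H ((-(x + 50)) / (2 * π)) = (2 * π) * ∫ y, H y := by
    intro H
    rw [integral_add_right_eq_self (fun x => H ((-x) / (2 * π))) 50,
      integral_neg_eq_self (fun x => H (x / (2 * π))), Measure.integral_comp_div, smul_eq_mul,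
      abs_of_pos hpi]
  have ci : ∀ H : ℝ → ℝ, Integrable H → Integrable fun x => H ((-(x + 50)) / (2 * π)) := by
    intro H hH
    exact ((hH.comp_div hpi.ne').comp_neg).comp_add_right 50
  have e1 : (1 / (2 * π)) * ((∫ ξ, a ξ ^ 2) - (1 / 2025) * ∫ ξ, (deriv a ξ) ^ 2) =
      ∫ x, G ((-(x + 50)) / (2 * π)) := by
    rw [cv, hG, integral_const_mul, integral_sub I1 (I2.const_mul _), integral_const_mul, P1, P2]
    field_simp
  rw [e1]
  simp only [hF]
  have nrm : ∀ z : ℂ, ‖(1 / (2 * π) : ℂ) * z‖ ^ 2 = (1 / (2 * π)) ^ 2 * ‖z‖ ^ 2 := by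
    intro z
    rw [norm_mul, mul_pow]
    simp [abs_of_pos Real.pi_pos]
  simp only [nrm]
  refine integral_mono (ci G IG) ?_ ?_
  · have h0 := (ci _ I1).const_mul ((1 / (2 * π)) ^ 2)
    refine h0.bdd_mul (c := 1) hp.aestronglyMeasurable (Eventually.of_forall fun x => ?_)
    rw [Real.norm_eq_abs, abs_of_nonneg (hp01 x).1]; exact (hp01 x).2
  · intro x
    simp only [hG]
    set N := ‖g (-(x + 50) / (2 * π))‖ ^ 2
    have hN : 0 ≤ N := by positivity
    have hy : 2 * π * (-(x + 50) / (2 * π)) = -(x+50) := by field_simp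
    rw [hy]
    have hpx : 1 - (x + 50) ^ 2 / 2025 ≤ p x := by
      by_cases h : x ∈ Set.Icc (-95 : ℝ) (-5)
      · rw [hpone x ⟨by linarith [h.1], h.2⟩]; nlinarith [sq_nonneg (x+50)]
      · have : 2025 ≤ (x + 50) ^ 2 := by
          simp only [Set.mem_Icc, not_and_or, not_le] at h
          rcases h with h | h <;> nlinarith
        linarith [(hp01 x).1]
    have h2 : 0 ≤ (1 / (2 * π)) ^ 2 * N := by positivity
    nlinarith [mul_le_mul_of_nonneg_right hpx h2]

/-- The real weight `(1+ξ²)^{ε/2-1/4} (1+log(1+ξ²))^{-2}`. -/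
noncomputable def wgt (ε ξ : ℝ) : ℝ :=
  (1 + ξ ^ 2) ^ (ε / 2) * ((1 + ξ ^ 2) ^ (-(1 / 4 : ℝ)) * (1 + Real.log (1 + ξ ^ 2)) ^ (-(2 : ℝ)))

lemma one_le_aux (ξ : ℝ) : 1 ≤ 1 + ξ ^ 2 := by nlinarith [sq_nonneg ξ]

lemma one_le_log_aux (ξ : ℝ) : 1 ≤ 1 + Real.log (1 + ξ ^ 2) := by
  linarith [Real.log_nonneg (one_le_aux ξ)]

lemma wgt_eq (ε ξ : ℝ) : wgt ε ξ =
    (1 + ξ ^ 2) ^ (ε / 2 - 1 / 4) * (1 + Real.log (1 + ξ ^ 2)) ^ (-(2 : ℝ)) := by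
  have := one_le_aux ξ
  rw [wgt, ← mul_assoc, ← Real.rpow_add (by linarith)]; rfl

lemma wgt_pos (ε ξ : ℝ) : 0 < wgt ε ξ := by
  have := one_le_aux ξ
  have := one_le_log_aux ξ
  rw [wgt_eq]
  exact mul_pos (Real.rpow_pos_of_pos (by linarith) _) (Real.rpow_pos_of_pos (by linarith) _)

lemma wgt_le_one (ε : ℝ) (hε' : ε < 1 / 2) (ξ : ℝ) : wgt ε ξ ≤ 1 := by
  have h1 := one_le_aux ξ
  have h2 := one_le_log_aux ξ
  rw [wgt_eq]
  exact mul_le_one₀ (Real.rpow_le_one_of_one_le_of_nonpos h1 (by linarith))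
    (Real.rpow_nonneg (by linarith) _) (Real.rpow_le_one_of_one_le_of_nonpos h2 (by norm_num))

lemma wgt_contDiff (ε : ℝ) : ContDiff ℝ (⊤ : ℕ∞) (wgt ε) := by
  have h1 : ∀ ξ : ℝ, 1 + ξ ^ 2 ≠ 0 := fun ξ => by linarith [one_le_aux ξ]
  have h2 : ∀ ξ : ℝ, 1 + Real.log (1 + ξ ^ 2) ≠ 0 := fun ξ => by linarith [one_le_log_aux ξ]
  have c1 : ContDiff ℝ (⊤ : ℕ∞) fun ξ : ℝ => 1 + ξ ^ 2 := by fun_prop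
  exact (c1.rpow_const_of_ne h1).mul ((c1.rpow_const_of_ne h1).mul
    ((contDiff_const.add (c1.log h1)).rpow_const_of_ne h2))

lemma wgt_deriv_sq (ε : ℝ) (hε : 0 < ε) (hε' : ε < 1 / 2) (ξ : ℝ) :
    (deriv (wgt ε) ξ) ^ 2 ≤ 25 * (1 + ξ ^ 2)⁻¹ := by
  have h1 := one_le_aux ξ
  have h2 := one_le_log_aux ξ
  have hu : 0 < 1 + ξ ^ 2 := by linarith
  have hL : 0 < 1 + Real.log (1 + ξ ^ 2) := by linarith
  have d1 : HasDerivAt (fun ξ : ℝ => 1 + ξ ^ 2) (2 * ξ) ξ := by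
    simpa using (hasDerivAt_pow 2 ξ).const_add 1
  have d2 : HasDerivAt (fun ξ : ℝ => 1 + Real.log (1 + ξ ^ 2)) (2 * ξ / (1 + ξ ^ 2)) ξ :=
    (d1.log hu.ne').const_add 1
  have d3 := (d1.rpow_const (p := ε / 2 - 1 / 4) (Or.inl hu.ne')).mul
    (d2.rpow_const (p := -(2 : ℝ)) (Or.inl hL.ne'))
  have d4 : HasDerivAt (wgt ε) (wgt ε ξ * (2 * ξ / (1 + ξ ^ 2)) *
      ((ε / 2 - 1 / 4) - 2 * (1 + Real.log (1 + ξ ^ 2))⁻¹)) ξ := by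
    have : wgt ε = (fun ξ : ℝ => (1 + ξ ^ 2) ^ (ε / 2 - 1 / 4)) *
      (fun ξ : ℝ => (1 + Real.log (1 + ξ ^ 2)) ^ (-(2 : ℝ))) := funext (wgt_eq ε)
    rw [this]
    refine d3.congr_deriv ?_
    rw [Pi.mul_apply, Real.rpow_sub_one hu.ne', Real.rpow_sub_one hL.ne']
    field_simp
    ring
  rw [d4.deriv, mul_pow, mul_pow]
  have b1 : wgt ε ξ ^ 2 ≤ 1 := pow_le_one₀ (wgt_pos ε ξ).le (wgt_le_one ε hε' ξ)
  have b2 : (2 * ξ / (1 + ξ ^ 2)) ^ 2 ≤ 4 * (1 + ξ ^ 2)⁻¹ := by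
    rw [div_pow, div_le_iff₀ (by positivity)]
    field_simp
    nlinarith
  have hi : (1 + Real.log (1 + ξ ^ 2))⁻¹ ≤ 1 := inv_le_one_of_one_le₀ h2
  have hi0 : 0 < (1 + Real.log (1 + ξ ^ 2))⁻¹ := inv_pos.2 hL
  have b3 : ((ε / 2 - 1 / 4) - 2 * (1 + Real.log (1 + ξ ^ 2))⁻¹) ^ 2 ≤ 25 / 4 := by
    rw [← sq_abs]
    have : |(ε / 2 - 1 / 4) - 2 * (1 + Real.log (1 + ξ ^ 2))⁻¹| ≤ 5 / 2 := by
      rw [abs_le]; constructor <;> linarith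
    calc _ ≤ (5 / 2 : ℝ) ^ 2 := by gcongr
      _ = _ := by norm_num
  calc _ ≤ 1 * (4 * (1 + ξ ^ 2)⁻¹) * (25 / 4) := by gcongr
    _ = _ := by ring

lemma wgt_sq_lower (ε : ℝ) (hε : 0 < ε) (ξ : ℝ) (hξ : 0 ≤ ξ) :
    ((1 + 4 / ε) ^ 4)⁻¹ * (1 + ξ)⁻¹ ≤ wgt ε ξ ^ 2 := by
  have h1 := one_le_aux ξ
  have h2 := one_le_log_aux ξ
  have hu : 0 < 1 + ξ ^ 2 := by linarith
  have hL : 0 < 1 + Real.log (1 + ξ ^ 2) := by linarith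
  have l1 : 1 + Real.log (1 + ξ ^ 2) ≤ (1 + 4 / ε) * (1 + ξ ^ 2) ^ (ε / 4) := by
    have a1 := Real.log_le_rpow_div hu.le (show 0 < ε / 4 by positivity)
    have a2 : 1 ≤ (1 + ξ ^ 2) ^ (ε / 4) := Real.one_le_rpow h1 (by positivity)
    have : (1 + ξ ^ 2) ^ (ε / 4) / (ε / 4) = 4 / ε * (1 + ξ ^ 2) ^ (ε / 4) := by field_simp
    linarith
  have l2 : (1 + Real.log (1 + ξ ^ 2)) ^ 4 ≤ (1 + 4 / ε) ^ 4 * (1 + ξ ^ 2) ^ ε := by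
    calc _ ≤ ((1 + 4 / ε) * (1 + ξ ^ 2) ^ (ε / 4)) ^ 4 := by gcongr
      _ = _ := by
        rw [mul_pow, ← Real.rpow_mul_natCast hu.le]; congr 2; push_cast; ring
  have e : wgt ε ξ ^ 2 = (1 + ξ ^ 2) ^ (ε - 1 / 2) * ((1 + Real.log (1 + ξ ^ 2)) ^ 4)⁻¹ := by
    rw [wgt_eq, mul_pow, ← Real.rpow_mul_natCast hu.le, Real.rpow_neg hL.le]
    congr 1
    · congr 1; push_cast; ring
    · norm_cast; rw [inv_pow, ← pow_mul]
  have l3 : (1 + ξ)⁻¹ ≤ (1 + ξ ^ 2) ^ (-(1 / 2) : ℝ) := by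
    rw [Real.rpow_neg hu.le, ← Real.sqrt_eq_rpow]
    apply inv_anti₀ (Real.sqrt_pos.2 hu)
    rw [Real.sqrt_le_left (by linarith)]; nlinarith
  rw [e]
  calc ((1 + 4 / ε) ^ 4)⁻¹ * (1 + ξ)⁻¹ ≤ ((1 + 4 / ε) ^ 4)⁻¹ * (1 + ξ ^ 2) ^ (-(1 / 2) : ℝ) := by gcongr
    _ = (1 + ξ ^ 2) ^ (ε - 1 / 2) * ((1 + 4 / ε) ^ 4 * (1 + ξ ^ 2) ^ ε)⁻¹ := by
      rw [mul_inv, ← Real.rpow_neg hu.le, mul_left_comm, ← Real.rpow_add hu]; ring_nf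
    _ ≤ _ := by gcongr

/-- For the data `φ_n` with `φ̂_n(ξ) = e^{50iξ} χ_n(ξ)(1+ξ²)^{-1/4}(1+log(1+ξ²))^{-2}`
(with `χ_n` even smooth cutoffs equal to `1` on `[0,n]`, vanishing for `ξ ≥ n+1`, with
uniformly bounded derivatives) and a continuous `p : ℝ → [0,1]` with `p = 1` on
`[-99,-5]` and support in `[-110,-1]`, the localized quantities
`∫ p(x) |Λ^ε φ_n(x)|² dx` tend to infinity. -/
theorem localized_lambda_eps_norms_tendsto_atTop
    (ε : ℝ) (hε : 0 < ε) (hε' : ε < 1 / 2)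
    (χ : ℕ → ℝ → ℝ) (hχsmooth : ∀ n, ContDiff ℝ (⊤ : ℕ∞) (χ n))
    (hχeven : ∀ n ξ, χ n (-ξ) = χ n ξ)
    (hχ01 : ∀ n ξ, 0 ≤ χ n ξ ∧ χ n ξ ≤ 1)
    (hχone : ∀ n : ℕ, ∀ ξ : ℝ, 0 ≤ ξ → ξ ≤ n → χ n ξ = 1)
    (hχzero : ∀ n : ℕ, ∀ ξ : ℝ, (n : ℝ) + 1 ≤ ξ → χ n ξ = 0)
    (hχderiv : ∀ k : ℕ, 1 ≤ k → ∃ K : ℝ, ∀ n ξ, |iteratedDeriv k (χ n) ξ| ≤ K)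
    (p : ℝ → ℝ) (hp : Continuous p) (hp01 : ∀ x, 0 ≤ p x ∧ p x ≤ 1)
    (hpone : ∀ x ∈ Set.Icc (-99 : ℝ) (-5), p x = 1)
    (hpsupp : Function.support p ⊆ Set.Icc (-110 : ℝ) (-1)) :
    Tendsto (fun n : ℕ => ∫ x : ℝ, p x *
        ‖(1 / (2 * π) : ℂ) * ∫ ξ : ℝ, Complex.exp (Complex.I * x * ξ) *
            (((1 + ξ ^ 2) ^ (ε / 2) : ℝ) : ℂ) *
            (Complex.exp (50 * Complex.I * ξ) * (χ n ξ : ℂ) *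
              (((1 + ξ ^ 2) ^ (-(1 / 4 : ℝ)) *
                (1 + Real.log (1 + ξ ^ 2)) ^ (-(2 : ℝ)) : ℝ) : ℂ))‖ ^ 2)
      atTop atTop := by
  obtain ⟨K, hK⟩ := hχderiv 1 le_rfl
  have hK' : ∀ n ξ, |deriv (χ n) ξ| ≤ K := fun n ξ => by simpa using hK n ξ
  have hone : ∀ (n : ℕ) (ξ : ℝ), |ξ| ≤ n → χ n ξ = 1 := by
    intro n ξ h
    rcases abs_cases ξ with ⟨h1, h2⟩ | ⟨h1, h2⟩
    · exact hχone n ξ h2 (h1 ▸ h)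
    · rw [← hχeven]; exact hχone n _ (by linarith) (h1 ▸ h)
  have hzero : ∀ (n : ℕ) (ξ : ℝ), (n : ℝ) + 1 ≤ |ξ| → χ n ξ = 0 := by
    intro n ξ h
    rcases abs_cases ξ with ⟨h1, h2⟩ | ⟨h1, h2⟩
    · exact hχzero n ξ (h1 ▸ h)
    · rw [← hχeven]; exact hχzero n _ (h1 ▸ h)
  let a : ℕ → ℝ → ℝ := fun n ξ => χ n ξ * wgt ε ξ
  have ha : ∀ n, ContDiff ℝ (⊤ : ℕ∞) (a n) := fun n => (hχsmooth n).mul (wgt_contDiff ε)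
  have hχc : ∀ n, HasCompactSupport (χ n) := by
    intro n
    refine HasCompactSupport.intro (isCompact_Icc (a := -((n : ℝ) + 1)) (b := (n : ℝ) + 1)) ?_
    intro ξ hξ
    apply hzero
    by_contra! h
    exact hξ ⟨(abs_le.1 h.le).1, (abs_le.1 h.le).2⟩
  have hc : ∀ n, HasCompactSupport (a n) := fun n => (hχc n).mul_right
  let S : ℕ → Set ℝ := fun n => Set.Icc (n : ℝ) (n + 1) ∪ Set.Icc (-(n + 1) : ℝ) (-n)
  have hSm : ∀ n, MeasurableSet (S n) := fun n => measurableSet_Icc.union measurableSet_Icc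
  have hSv : ∀ n, volume (S n) ≤ 2 := by
    intro n
    refine (measure_union_le _ _).trans ?_
    rw [Real.volume_Icc, Real.volume_Icc]
    have e1 : (n : ℝ) + 1 - n = 1 := by ring
    have e2 : -(n : ℝ) - -(n + 1) = 1 := by ring
    rw [e1, e2]; norm_num
  have hdχ : ∀ n ξ, ξ ∉ S n → deriv (χ n) ξ = 0 := by
    intro n ξ hξ
    simp only [S, Set.mem_union, Set.mem_Icc, not_or, not_and_or, not_le] at hξ
    have hcase : |ξ| < n ∨ (n : ℝ) + 1 < |ξ| := by
      by_contra! hh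
      rcases abs_cases ξ with ⟨h1, h2⟩ | ⟨h1, h2⟩ <;> rw [h1] at hh <;>
        rcases hξ with ⟨h3 | h3, h4 | h4⟩ <;> linarith
    rcases hcase with h | h
    · have : χ n =ᶠ[nhds ξ] fun _ => 1 := by
        filter_upwards [(isOpen_lt continuous_abs continuous_const).mem_nhds h] with y hy
        exact hone n y (le_of_lt hy)
      rw [this.deriv_eq]; simp
    · have : χ n =ᶠ[nhds ξ] fun _ => 0 := by
        filter_upwards [(isOpen_lt continuous_const continuous_abs).mem_nhds h] with y hy
        exact hzero n y (le_of_lt hy)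
      rw [this.deriv_eq]; simp
  have hIndI : ∀ n, Integrable ((S n).indicator fun _ => 2 * K ^ 2) := fun n =>
    (integrable_indicator_iff (hSm n)).2
      (integrableOn_const ((hSv n).trans_lt (by norm_num)).ne)
  -- derivative bound
  have hD : ∀ n, ∫ ξ, (deriv (a n) ξ) ^ 2 ≤ 50 * π + 4 * K ^ 2 := by
    intro n
    have hpt : ∀ ξ, (deriv (a n) ξ) ^ 2 ≤
        50 * (1 + ξ ^ 2)⁻¹ + (S n).indicator (fun _ => 2 * K ^ 2) ξ := by
      intro ξ
      have d : deriv (a n) ξ = deriv (χ n) ξ * wgt ε ξ + χ n ξ * deriv (wgt ε) ξ :=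
        (((hχsmooth n).differentiable (by simp) ξ).hasDerivAt.mul
          ((wgt_contDiff ε).differentiable (by simp) ξ).hasDerivAt).deriv
      have b1 : (χ n ξ * deriv (wgt ε) ξ) ^ 2 ≤ 25 * (1 + ξ ^ 2)⁻¹ := by
        rw [mul_pow]
        have c1 : χ n ξ ^ 2 ≤ 1 := pow_le_one₀ (hχ01 n ξ).1 (hχ01 n ξ).2
        have c2 := wgt_deriv_sq ε hε hε' ξ
        nlinarith [sq_nonneg (deriv (wgt ε) ξ)]
      have b2 : 2 * (deriv (χ n) ξ * wgt ε ξ) ^ 2 ≤ (S n).indicator (fun _ => 2 * K ^ 2) ξ := by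
        by_cases h : ξ ∈ S n
        · rw [Set.indicator_of_mem h, mul_pow]
          have c1 : wgt ε ξ ^ 2 ≤ 1 := pow_le_one₀ (wgt_pos ε ξ).le (wgt_le_one ε hε' ξ)
          have c2 : deriv (χ n) ξ ^ 2 ≤ K ^ 2 := by
            rw [← sq_abs]; gcongr; exact hK' n ξ
          nlinarith [sq_nonneg (deriv (χ n) ξ)]
        · rw [Set.indicator_of_notMem h, hdχ n ξ h]; simp
      rw [d]
      nlinarith [sq_nonneg (deriv (χ n) ξ * wgt ε ξ - χ n ξ * deriv (wgt ε) ξ)]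
    have hI1 : Integrable (fun ξ : ℝ => 50 * (1 + ξ ^ 2)⁻¹) := integrable_inv_one_add_sq.const_mul _
    calc ∫ ξ, (deriv (a n) ξ) ^ 2
        ≤ ∫ ξ, (50 * (1 + ξ ^ 2)⁻¹ + (S n).indicator (fun _ => 2 * K ^ 2) ξ) :=
          integral_mono_of_nonneg (Eventually.of_forall fun ξ => sq_nonneg _)
            (hI1.add (hIndI n)) (Eventually.of_forall hpt)
      _ = 50 * π + volume.real (S n) * (2 * K ^ 2) := by
          rw [integral_add hI1 (hIndI n), integral_const_mul, integral_univ_inv_one_add_sq,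
            integral_indicator_const _ (hSm n), smul_eq_mul]
      _ ≤ 50 * π + 2 * (2 * K ^ 2) := by
          gcongr
          exact ENNReal.toReal_le_of_le_ofReal (by norm_num) (by simpa using hSv n)
      _ = _ := by ring
  -- lower bound
  set c : ℝ := ((1 + 4 / ε) ^ 4)⁻¹ with hcdef
  have hcpos : 0 < c := by positivity
  have hL : ∀ n : ℕ, c * Real.log (1 + n) ≤ ∫ ξ, a n ξ ^ 2 := by
    intro n
    have hcont : Continuous fun ξ => a n ξ ^ 2 := (ha n).continuous.pow 2
    have hInt : Integrable fun ξ => a n ξ ^ 2 := by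
      refine hcont.integrable_of_hasCompactSupport ?_
      exact (hc n).comp_left (g := fun r : ℝ => r ^ 2) (by simp)
    have hn0 : (0 : ℝ) ≤ n := n.cast_nonneg
    have e0 : ∫ ξ in (0 : ℝ)..n, c * (1 + ξ)⁻¹ = c * Real.log (1 + n) := by
      rw [intervalIntegral.integral_const_mul]
      congr 1
      rw [intervalIntegral.integral_comp_add_left (fun x : ℝ => x⁻¹) 1,
        integral_inv_of_pos (by norm_num) (by positivity)]
      simp
    rw [← e0]
    have i1 : IntervalIntegrable (fun ξ : ℝ => c * (1 + ξ)⁻¹) volume 0 n := by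
      apply ContinuousOn.intervalIntegrable
      rw [Set.uIcc_of_le hn0]
      refine continuousOn_const.mul (ContinuousOn.inv₀ (by fun_prop) ?_)
      intro x hx; linarith [hx.1]
    calc ∫ ξ in (0 : ℝ)..n, c * (1 + ξ)⁻¹ ≤ ∫ ξ in (0 : ℝ)..n, a n ξ ^ 2 := by
          refine intervalIntegral.integral_mono_on hn0 i1 (hcont.intervalIntegrable _ _) ?_
          intro x hx
          simp only [a]
          rw [hχone n x hx.1 hx.2, one_mul]
          exact wgt_sq_lower ε hε x hx.1
      _ = ∫ ξ in Set.Ioc (0 : ℝ) n, a n ξ ^ 2 := intervalIntegral.integral_of_le hn0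
      _ ≤ _ := setIntegral_le_integral hInt (Eventually.of_forall fun ξ => sq_nonneg _)
  have hfin : Tendsto (fun n : ℕ => (1 / (2 * π)) *
      (c * Real.log (1 + n) - (1 / 2025) * (50 * π + 4 * K ^ 2))) atTop atTop := by
    refine Tendsto.const_mul_atTop (by positivity) ?_
    refine tendsto_atTop_add_const_right _ _ ?_
    refine Tendsto.const_mul_atTop hcpos ?_
    exact Real.tendsto_log_atTop.comp
      (tendsto_atTop_add_const_left _ _ tendsto_natCast_atTop_atTop)
  refine tendsto_atTop_mono (fun n => ?_) hfin
  have hkey := key_lower (a n) (ha n) (hc n) p hp hp01 hpone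
  refine le_trans ?_ (hkey.trans_eq ?_)
  · have := hL n
    have := hD n
    gcongr
  · congr 1; ext x; congr 4; refine congrArg (integral volume) (funext fun ξ => ?_)
    have : Complex.exp (Complex.I * (x + 50) * ξ) =
        Complex.exp (Complex.I * x * ξ) * Complex.exp (50 * Complex.I * ξ) := by
      rw [← Complex.exp_add]; congr 1; ring
    rw [this]
    simp only [a, wgt]
    push_cast
    ring
end
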